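/- The closed interval [-1,1] ⊆ ℝ with the Euclidean topology, the midpoint operation x ⊕ y = (x+y)/2, and the points -1 and 1, is a parametrised interval object in the category of topological spaces: for every topological space X, every midpoint-convex body (A, m) in the category of topological spaces, and all continuous maps f, g : X → A, there is a unique continuous map h : X × [-1,1] → A satisfying h(x, -1) = f(x), h(x, 1) = g(x), and h(x, s ⊕ t) = m(h(x,s), h(x,t)) for all x ∈ X and s, t ∈ [-1,1]. -/

import Mathlib

/-- A midpoint operation: idempotent, commutative, satisfying transposition. -/
def IsMidpoint {A : Type} (m : A → A → A) : Prop :=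
  (∀ x, m x x = x) ∧ (∀ x y, m x y = m y x) ∧
    (∀ x y z w, m (m x y) (m z w) = m (m x z) (m y w))

/-- Cancellation: `m x y = m x z` implies `y = z`. -/
def Cancellative {A : Type} (m : A → A → A) : Prop :=
  ∀ x y z, m x y = m x z → y = z

/-- Iterativity in the category of topological spaces. -/
def TopIterative {A : Type} [TopologicalSpace A] (m : A → A → A) : Prop :=
  ∀ (X : Type) [TopologicalSpace X], ∀ c : X → A × X, Continuous c →
    ∃! u : X → A, Continuous u ∧ ∀ x, u x = m (c x).1 (u (c x).2)

/-- The midpoint operation `x ⊕ y = (x+y)/2` on the closed interval `[a,b]`. -/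
noncomputable def iccMid (a b : ℝ) (x y : Set.Icc a b) : Set.Icc a b :=
  ⟨(x.1 + y.1) / 2,
    ⟨by have h1 := x.2.1; have h2 := y.2.1; linarith,
     by have h1 := x.2.2; have h2 := y.2.2; linarith⟩⟩


/-- Uniqueness of set-theoretic solutions of the recursion. -/
theorem iter_unique {A : Type} [TopologicalSpace A] {m : A → A → A} (hit : TopIterative m)
    {Y : Type} (c : Y → A × Y) (u v : Y → A) (hu : ∀ y, u y = m (c y).1 (u (c y).2))
    (hv : ∀ y, v y = m (c y).1 (v (c y).2)) : u = v := by
  letI : TopologicalSpace Y := ⊥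
  haveI : DiscreteTopology Y := ⟨rfl⟩
  exact (hit Y c continuous_of_discreteTopology).unique
    ⟨continuous_of_discreteTopology, hu⟩ ⟨continuous_of_discreteTopology, hv⟩

/-- The interval. -/
abbrev II := Set.Icc (-1 : ℝ) 1

/-- The endpoints. -/
def lo : II := ⟨-1, le_refl (-1 : ℝ), by norm_num⟩

/-- The endpoints. -/
def hi : II := ⟨1, by norm_num, le_refl (1 : ℝ)⟩

/-- Digit to endpoint. -/
def ept (b : Bool) : II := if b then hi else lo

open Classical in
/-- First digit of a point. -/
noncomputable def dig (t : II) : Bool := decide (0 < t.1)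

/-- Remainder of a point. -/
noncomputable def rst (t : II) : II :=
  if h : 0 < t.1 then ⟨2 * t.1 - 1, by linarith, by linarith [t.2.2]⟩
  else ⟨2 * t.1 + 1, by linarith [t.2.1], by linarith⟩

theorem dig_rst (t : II) : iccMid (-1) 1 (ept (dig t)) (rst t) = t := by
  apply Subtype.ext
  by_cases h : 0 < t.1
  · simp [iccMid, ept, dig, rst, h, hi]
  · simp [iccMid, ept, dig, rst, h, lo]

/-- Itineraries. -/
def itinSet : Set (ℕ → Bool × II) :=
  {k | ∀ n, (k n).2 = iccMid (-1) 1 (ept (k n).1) (k (n + 1)).2}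

/-- Itineraries. -/
abbrev Itin := ↥itinSet

theorem continuous_iccMid : Continuous fun p : II × II => iccMid (-1) 1 p.1 p.2 := by
  unfold iccMid
  fun_prop

theorem itin_compact : CompactSpace Itin := by
  apply isCompact_iff_compactSpace.mp
  apply IsClosed.isCompact
  unfold itinSet
  rw [Set.ofPred_forall]
  refine isClosed_iInter fun n => isClosed_eq (by fun_prop) ?_
  have h1 : Continuous ept := continuous_of_discreteTopology
  exact continuous_iccMid.comp (by fun_prop : Continuous fun k : ℕ → Bool × II =>
    (ept (k n).1, (k (n + 1)).2))

/-- Shift. -/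
def Itin.shift (k : Itin) : Itin := ⟨fun n => k.1 (n + 1), fun n => k.2 (n + 1)⟩

/-- Value. -/
def Itin.val0 (k : Itin) : II := (k.1 0).2

theorem Itin.continuous_shift : Continuous Itin.shift := by
  refine Continuous.subtype_mk (continuous_pi fun n => ?_) _
  exact (continuous_apply (n + 1)).comp continuous_subtype_val

theorem Itin.continuous_val0 : Continuous Itin.val0 := by
  exact continuous_snd.comp ((continuous_apply 0).comp continuous_subtype_val)

theorem Itin.surj : Function.Surjective Itin.val0 := by
  intro t
  refine ⟨⟨fun n => (dig (rst^[n] t), rst^[n] t), fun n => ?_⟩, rfl⟩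
  simp only [Function.iterate_succ_apply']
  exact (dig_rst _).symm

theorem quot (X : Type) [TopologicalSpace X] :
    Topology.IsQuotientMap (fun p : X × Itin => (p.1, p.2.val0)) := by
  haveI := itin_compact
  have h : IsProperMap (Prod.map (id : X → X) Itin.val0) :=
    isProperMap_id.prodMap Itin.continuous_val0.isProperMap
  exact h.isClosedMap.isQuotientMap h.continuous
    (Function.surjective_id.prodMap Itin.surj)

/-- Existence of the pointwise recursion. -/
theorem exists_interp {A : Type} [TopologicalSpace A] {m : A → A → A}
    (hm : IsMidpoint m) (hit : TopIterative m) {X : Type} (f g : X → A) :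
    ∃ h : X × II → A, (∀ x, h (x, lo) = f x) ∧ (∀ x, h (x, hi) = g x) ∧
      ∀ x b t, h (x, iccMid (-1) 1 (ept b) t) = m (if b then g x else f x) (h (x, t)) := by
  obtain ⟨hid, hcm, htr⟩ := hm
  let c : X × II → A × (X × II) := fun p =>
    (if dig p.2 then g p.1 else f p.1, (p.1, rst p.2))
  letI : TopologicalSpace (X × II) := ⊥
  haveI : DiscreteTopology (X × II) := ⟨rfl⟩
  obtain ⟨h, ⟨-, hr⟩, -⟩ := hit (X × II) c continuous_of_discreteTopology
  have hlo : ∀ x, h (x, lo) = f x := by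
    intro x
    have : h (x, lo) = m (f x) (h (x, lo)) := by
      have e : rst lo = lo := by
        apply Subtype.ext; norm_num [rst, lo]
      have d : dig lo = false := by norm_num [dig, lo]
      have := hr (x, lo)
      simpa [c, e, d] using this
    have := iter_unique hit (fun y : Unit => (f x, y)) (fun _ => h (x, lo)) (fun _ => f x)
      (fun _ => this) (fun _ => (hid _).symm)
    exact congrFun this ()
  have hhi : ∀ x, h (x, hi) = g x := by
    intro x
    have : h (x, hi) = m (g x) (h (x, hi)) := by
      have e : rst hi = hi := by
        apply Subtype.ext; norm_num [rst, hi]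
      have d : dig hi = true := by norm_num [dig, hi]
      have := hr (x, hi)
      simpa [c, e, d] using this
    have := iter_unique hit (fun y : Unit => (g x, y)) (fun _ => h (x, hi)) (fun _ => g x)
      (fun _ => this) (fun _ => (hid _).symm)
    exact congrFun this ()
  refine ⟨h, hlo, hhi, ?_⟩
  intro x b t
  have key := hr (x, iccMid (-1) 1 (ept b) t)
  by_cases hd : dig (iccMid (-1) 1 (ept b) t) = b
  · have e : rst (iccMid (-1) 1 (ept b) t) = t := by
      apply Subtype.ext
      cases b
      · simp [dig, iccMid, ept, lo] at hd
        have : ¬ (0 < (-1 + t.1) / 2) := by linarith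
        simp [rst, iccMid, ept, lo, this]
        ring
      · simp [dig, iccMid, ept, hi] at hd
        have : (0 < (1 + t.1) / 2) := by linarith
        simp [rst, iccMid, ept, hi, this]
        ring
    simpa [c, e, hd] using key
  · have hb : b = true ∧ t = lo := by
      cases b
      · simp [dig, iccMid, ept, lo] at hd
        exact absurd t.2.2 (by linarith)
      · simp [dig, iccMid, ept, hi] at hd
        exact ⟨rfl, Subtype.ext (by have := t.2.1; simp only [lo]; linarith)⟩
    obtain ⟨rfl, rfl⟩ := hb
    have e : rst (iccMid (-1) 1 (ept true) lo) = hi := by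
      apply Subtype.ext
      norm_num [rst, iccMid, ept, lo, hi]
    simp [c, e, hd, hhi] at key
    rw [key, hlo, hcm]
    simp

theorem half {A : Type} {m : A → A → A}
    (hm : IsMidpoint m) {X : Type} {f g : X → A} {h : X × II → A}
    (hr : ∀ x b t, h (x, iccMid (-1) 1 (ept b) t) = m (if b then g x else f x) (h (x, t)))
    (x : X) (r : II) :
    h (x, iccMid (-1) 1 (iccMid (-1) 1 lo hi) r) = m (m (f x) (g x)) (h (x, r)) := by
  obtain ⟨hid, hcm, htr⟩ := hm
  have hf : ∀ x t, h (x, iccMid (-1) 1 lo t) = m (f x) (h (x, t)) := fun x t => by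
    simpa [ept] using hr x false t
  have hg : ∀ x t, h (x, iccMid (-1) 1 hi t) = m (g x) (h (x, t)) := fun x t => by
    simpa [ept] using hr x true t
  obtain ⟨b, s, rfl⟩ : ∃ b s, r = iccMid (-1) 1 (ept b) s := ⟨_, _, (dig_rst r).symm⟩
  cases b
  · have e : iccMid (-1) 1 (iccMid (-1) 1 lo hi) (iccMid (-1) 1 (ept false) s)
        = iccMid (-1) 1 lo (iccMid (-1) 1 hi s) := by
      apply Subtype.ext
      simp [iccMid, ept, lo, hi]; ring
    have e2 : ept false = lo := rfl
    rw [e, e2, hf, hf, hg, htr, hid]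
  · have e : iccMid (-1) 1 (iccMid (-1) 1 lo hi) (iccMid (-1) 1 (ept true) s)
        = iccMid (-1) 1 hi (iccMid (-1) 1 lo s) := by
      apply Subtype.ext
      simp [iccMid, ept, lo, hi]; ring
    have e2 : ept true = hi := rfl
    rw [e, e2, hg, hf, hg, hcm (f x) (g x), htr, hid]

theorem iccMid_transp (a b c d : II) : iccMid (-1) 1 (iccMid (-1) 1 a b) (iccMid (-1) 1 c d)
    = iccMid (-1) 1 (iccMid (-1) 1 a c) (iccMid (-1) 1 b d) := by
  apply Subtype.ext
  simp [iccMid]; ring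

theorem iccMid_self (a : II) : iccMid (-1) 1 a a = a := by
  apply Subtype.ext
  simp [iccMid]

theorem iccMid_comm (a b : II) : iccMid (-1) 1 a b = iccMid (-1) 1 b a := by
  apply Subtype.ext
  simp [iccMid]; ring

theorem hom_of_rec {A : Type} [TopologicalSpace A] {m : A → A → A}
    (hm : IsMidpoint m) (hit : TopIterative m) {X : Type} {f g : X → A} {h : X × II → A}
    (hr : ∀ x b t, h (x, iccMid (-1) 1 (ept b) t) = m (if b then g x else f x) (h (x, t)))
    (x : X) (s t : II) : h (x, iccMid (-1) 1 s t) = m (h (x, s)) (h (x, t)) := by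
  have hh := half hm hr
  obtain ⟨hid, hcm, htr⟩ := hm
  let φ : Bool → A := fun b => if b then g x else f x
  have := iter_unique hit (fun p : II × II =>
      (m (φ (dig p.1)) (φ (dig p.2)), (rst p.1, rst p.2)))
    (fun p => h (x, iccMid (-1) 1 p.1 p.2)) (fun p => m (h (x, p.1)) (h (x, p.2))) ?_ ?_
  · exact congrFun this (s, t)
  · rintro ⟨s, t⟩
    dsimp only
    conv_lhs => rw [← dig_rst s, ← dig_rst t]
    rw [iccMid_transp]
    generalize dig s = b
    generalize dig t = b'
    cases b <;> cases b'
    · rw [iccMid_self, hr, hid]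
    · exact hh x _
    · rw [iccMid_comm (ept true), hcm (φ true)]
      exact hh x _
    · rw [iccMid_self, hr, hid]
  · rintro ⟨s, t⟩
    dsimp only
    conv_lhs => rw [← dig_rst s, ← dig_rst t]
    rw [hr, hr, htr]

theorem cont_of_rec {A : Type} [TopologicalSpace A] {m : A → A → A}
    (hit : TopIterative m) {X : Type} [TopologicalSpace X] {f g : X → A}
    (hf : Continuous f) (hg : Continuous g) {h : X × II → A}
    (hr : ∀ x b t, h (x, iccMid (-1) 1 (ept b) t) = m (if b then g x else f x) (h (x, t))) :
    Continuous h := by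
  rw [(quot X).continuous_iff]
  let c : X × Itin → A × (X × Itin) := fun p =>
    (if (p.2.1 0).1 then g p.1 else f p.1, (p.1, p.2.shift))
  have hc : Continuous c := by
    refine Continuous.prodMk ?_ (continuous_fst.prodMk
      (Itin.continuous_shift.comp continuous_snd))
    have h1 : Continuous fun q : X × Bool => if q.2 then g q.1 else f q.1 := by
      rw [continuous_prod_of_discrete_right]
      intro b
      cases b
      · simpa using hf
      · simpa using hg
    exact h1.comp (continuous_fst.prodMk (continuous_fst.comp ((continuous_apply 0).comp
      (continuous_subtype_val.comp continuous_snd))) :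
        Continuous fun p : X × Itin => (p.1, (p.2.1 0).1))
  obtain ⟨u, ⟨huc, hu⟩, -⟩ := hit _ c hc
  have : h ∘ (fun p : X × Itin => (p.1, p.2.val0)) = u := by
    refine iter_unique hit c _ _ ?_ hu
    rintro ⟨x, k⟩
    have e : k.val0 = iccMid (-1) 1 (ept (k.1 0).1) k.shift.val0 := k.2 0
    simp only [Function.comp_apply]
    conv_lhs => rw [e]
    exact hr _ _ _
  rw [this]
  exact huc

/-- `([-1,1], ⊕, -1, 1)` with the Euclidean topology is a parametrised interval
object in the category of topological spaces. -/
theorem parametrised_interval_object_in_Top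
    (X : Type) [TopologicalSpace X] (A : Type) [TopologicalSpace A]
    (m : A → A → A) (hcont : Continuous fun p : A × A => m p.1 p.2)
    (hm : IsMidpoint m) (hc : Cancellative m) (hit : TopIterative m)
    (f g : X → A) (hf : Continuous f) (hg : Continuous g) :
    ∃! h : X × Set.Icc (-1 : ℝ) 1 → A,
      Continuous h ∧
      (∀ x, h (x, ⟨-1, le_refl (-1 : ℝ), by norm_num⟩) = f x) ∧
      (∀ x, h (x, ⟨1, by norm_num, le_refl (1 : ℝ)⟩) = g x) ∧
      ∀ x s t, h (x, iccMid (-1) 1 s t) = m (h (x, s)) (h (x, t)) := by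
  obtain ⟨h, hlo, hhi, hr⟩ := exists_interp hm hit f g
  refine ⟨h, ⟨cont_of_rec hit hf hg hr, hlo, hhi, hom_of_rec hm hit hr⟩, ?_⟩
  rintro k ⟨-, klo, khi, kh⟩
  refine iter_unique hit (fun p : X × II =>
    (if dig p.2 then g p.1 else f p.1, (p.1, rst p.2))) k h ?_ ?_
  · rintro ⟨x, t⟩
    dsimp only
    conv_lhs => rw [← dig_rst t]
    rw [kh]
    congr 1
    cases dig t
    · exact klo x
    · exact khi x
  · rintro ⟨x, t⟩
    dsimp only
    conv_lhs => rw [← dig_rst t]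
    exact hr _ _ _
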